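/- Let α > 0 be a non-integer real number, let d > 0 and x > 0. Then lim_{t → 0⁺} t^{α/2} M(−α/2, 1/2, −x²/(4 d t)) = (√π / Γ(α/2 + 1/2)) · x^α / (2^α d^{α/2}). -/

import Mathlib

noncomputable def poch (a : ℝ) (s : ℕ) : ℝ := ∏ i ∈ Finset.range s, (a + i)

/-- Kummer's confluent hypergeometric function `M(a,b,z)`,
defined by the everywhere-convergent series `M(a,b,z) = Σ_{s} (a)_s z^s / ((b)_s s!)`. -/
noncomputable def kummerM (a b z : ℝ) : ℝ :=
  ∑' s : ℕ, poch a s / (poch b s * (Nat.factorial s)) * z ^ s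

/-- Tricomi's confluent hypergeometric function
`U(a,b,z) = (1/Γ(a)) ∫_0^∞ e^{−z t} t^{a−1} (1+t)^{b−a−1} dt`. -/
noncomputable def tricomiU (a b z : ℝ) : ℝ :=
  (1 / Real.Gamma a) *
    ∫ t in Set.Ioi (0:ℝ), Real.exp (-z * t) * t ^ (a - 1) * (1 + t) ^ (b - a - 1)

/-! Kummer's transformation gives `M(a, b, -z) = e^{-z} M(b-a, b, z)`, which is the expectation of
`u_N` for `u_s = (b-a)_s / (b)_s` and a Poisson variable `N` of mean `z`. By Euler's limit formula
for `Γ`, `u_s ∼ (Γ(b) / Γ(b-a)) s^{-a}`, and since `N` concentrates around `z` one expects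
`M(a, b, -z) ∼ (Γ(b) / Γ(b-a)) z^{-a}`; the theorem is the case `a = -α/2`, `b = 1/2`,
`z = x² / (4 d t)`.

To replace `N^p` by `z^p` for `p = -q < 0`, compare `u_s ∼ L s^p` with the positive sequence
`(1)_s / (q+1)_s ∼ Γ(q+1) s^p`, whose Poisson mean is exactly `q z^{-q} γ(q, z)`: when the
coefficients of the denominator are positive, the quotient of two entire power series has the same
limit at infinity as the quotient of their coefficients. The other exponents reduce to these because
`E[u_N] = e^{-z} u_0 + z E[u_{N+1} / (N+1)]`. -/

section

open Asymptotics Filter Real Topology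
open scoped Nat

lemma ne_neg_natCast_of_pos {a : ℝ} (ha : 0 < a) (k : ℕ) : a ≠ -k :=
  ((neg_nonpos.mpr k.cast_nonneg).trans_lt ha).ne'

lemma poch_succ (a : ℝ) (n : ℕ) : poch a (n + 1) = poch a n * (a + n) :=
  Finset.prod_range_succ _ n

lemma poch_succ' (a : ℝ) (n : ℕ) : poch a (n + 1) = a * poch (a + 1) n := by
  simp only [poch, Finset.prod_range_succ', Nat.cast_add_one, Nat.cast_zero, add_zero, mul_comm a,
    add_assoc, add_comm (1 : ℝ)]

lemma poch_one (n : ℕ) : poch 1 n = n ! := by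
  simp only [poch, ← Finset.prod_range_add_one_eq_factorial, Nat.cast_prod, Nat.cast_add_one,
    add_comm]

lemma poch_pos {a : ℝ} (ha : 0 < a) (n : ℕ) : 0 < poch a n :=
  Finset.prod_pos fun _ _ => by positivity

lemma poch_ne_zero {a : ℝ} (ha : ∀ k : ℕ, a ≠ -k) (n : ℕ) : poch a n ≠ 0 :=
  Finset.prod_ne_zero_iff.mpr fun k _ h => ha k (eq_neg_of_add_eq_zero_left h)

lemma GammaSeq_eq_poch (a : ℝ) (n : ℕ) :
    GammaSeq a n = (n : ℝ) ^ a * n ! / (poch a n * (a + n)) := by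
  rw [← poch_succ, poch, GammaSeq]

lemma tendsto_add_natCast_div_add_natCast (a b : ℝ) :
    Tendsto (fun n : ℕ => (a + n) / (b + n)) atTop (𝓝 1) := by
  simpa using tendsto_add_mul_div_add_mul_atTop_nhds a b 1 one_ne_zero

lemma tendsto_poch_div_poch_div_rpow {a : ℝ} (ha : ∀ k : ℕ, a ≠ -k) (b : ℝ) :
    Tendsto (fun n : ℕ => poch a n / poch b n / (n : ℝ) ^ (a - b)) atTop
      (𝓝 (Gamma b / Gamma a)) := by
  have hlim := ((GammaSeq_tendsto_Gamma b).div (GammaSeq_tendsto_Gamma a)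
    (Gamma_ne_zero ha)).mul (tendsto_add_natCast_div_add_natCast b a)
  rw [mul_one] at hlim
  refine hlim.congr' ?_
  have hne (c : ℝ) : ∀ᶠ n : ℕ in atTop, c + n ≠ 0 :=
    (tendsto_atTop_add_const_left _ c tendsto_natCast_atTop_atTop).eventually_ne_atTop 0
  filter_upwards [hne a, hne b, eventually_gt_atTop 0] with n han hbn hn
  have hn : (0 : ℝ) < n := Nat.cast_pos.mpr hn
  rw [Pi.div_apply, GammaSeq_eq_poch, GammaSeq_eq_poch, rpow_sub hn]
  field_simp [poch_ne_zero ha n]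

/-! ### Kummer's transformation -/

lemma sum_choose_mul_poch_div_poch (n : ℕ) {a b : ℝ} (hb : ∀ k : ℕ, b ≠ -k) :
    ∑ k ∈ Finset.range (n + 1), (n.choose k : ℝ) * ((-1) ^ k * (poch a k / poch b k)) =
      poch (b - a) n / poch b n := by
  induction n generalizing a b with
  | zero => simp [poch]
  | succ n ih =>
    have hb1 (k : ℕ) : b + 1 ≠ -k := fun h => hb (k + 1) (by push_cast; linarith)
    have hb0 : b ≠ 0 := by simpa using hb 0
    have hshift : ∑ k ∈ Finset.range (n + 1),
        (n.choose k : ℝ) * ((-1) ^ (k + 1) * (poch a (k + 1) / poch b (k + 1))) =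
          -(a / b) * (poch (b - a) n / poch (b + 1) n) := by
      rw [← add_sub_add_right_eq_sub b a 1, ← ih hb1, Finset.mul_sum]
      refine Finset.sum_congr rfl fun k _ => ?_
      rw [poch_succ', poch_succ', mul_div_mul_comm]
      ring
    have hpoch : poch (b + 1) n = poch b n * (b + n) / b := by
      rw [← poch_succ, poch_succ', mul_div_cancel_left₀ _ hb0]
    have hbn : b + n ≠ 0 := fun h => hb n (eq_neg_of_add_eq_zero_left h)
    rw [Finset.sum_choose_succ_mul (fun k _ => (-1 : ℝ) ^ k * (poch a k / poch b k)), ih hb, hshift,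
      hpoch, poch_succ, poch_succ]
    field_simp [poch_ne_zero hb n]
    ring

lemma summable_kummerM (a b z : ℝ) :
    Summable fun s : ℕ => poch a s / (poch b s * s !) * z ^ s := by
  have hratio : Tendsto (fun s : ℕ => (a + s) / (b + s) * (z / (s + 1))) atTop (𝓝 0) := by
    have hdecay : Tendsto (fun s : ℕ => z / ((s : ℝ) + 1)) atTop (𝓝 0) :=
      (tendsto_atTop_add_const_right _ 1 tendsto_natCast_atTop_atTop).const_div_atTop z
    simpa using (tendsto_add_natCast_div_add_natCast a b).mul hdecay
  refine summable_of_ratio_norm_eventually_le one_half_lt_one ?_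
  filter_upwards [hratio.norm.eventually_le_const (by norm_num : ‖(0 : ℝ)‖ < 1 / 2)] with s hs
  have hrec : poch a (s + 1) / (poch b (s + 1) * (s + 1)!) * z ^ (s + 1) =
      (a + s) / (b + s) * (z / (s + 1)) * (poch a s / (poch b s * s !) * z ^ s) := by
    rw [poch_succ, poch_succ, Nat.factorial_succ, Nat.cast_mul, Nat.cast_add_one]
    simp only [div_eq_mul_inv, mul_inv, pow_succ]
    ring
  rw [hrec, norm_mul]
  gcongr

theorem kummerM_neg (a : ℝ) {b : ℝ} (hb : ∀ k : ℕ, b ≠ -k) (z : ℝ) :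
    kummerM a b (-z) = exp (-z) * kummerM (b - a) b z := by
  have hexp : HasSum (fun n : ℕ => (-z) ^ n / n !) (exp (-z)) := by
    rw [exp_eq_exp_ℝ]
    exact NormedSpace.expSeries_div_hasSum_exp (-z)
  rw [mul_comm, kummerM, kummerM, ← hexp.tsum_eq,
    tsum_mul_tsum_eq_tsum_sum_range_of_summable_norm (summable_kummerM (b - a) b z).norm
      hexp.summable.norm]
  refine tsum_congr fun n => ?_
  rw [← div_div, ← sub_sub_cancel b a, ← sum_choose_mul_poch_div_poch n hb, sub_sub_cancel,
    Finset.sum_div, Finset.sum_mul]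
  refine Finset.sum_congr rfl fun k hk => ?_
  obtain ⟨m, rfl⟩ := Nat.exists_eq_add_of_le (Finset.mem_range_succ_iff.mp hk)
  have hsign : ((-1 : ℝ) ^ k) ^ 2 = 1 := by rw [pow_right_comm, neg_one_sq, one_pow]
  rw [Nat.cast_choose ℝ (Nat.le_add_right k m), Nat.add_sub_cancel_left, neg_pow z, neg_pow z,
    pow_add, pow_add]
  field_simp [poch_ne_zero hb k]
  rw [hsign, one_mul]

/-! ### Power series with comparable coefficients -/

section PowerSeries

variable {a b : ℕ → ℝ}

lemma isLittleO_pow_tsum_mul_pow (hb : ∀ s, 0 < b s)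
    (hsum : ∀ z : ℝ, Summable fun s => b s * z ^ s) (n : ℕ) :
    (fun z : ℝ => z ^ n) =o[atTop] fun z => ∑' s, b s * z ^ s := by
  refine (isLittleO_pow_pow_atTop_of_lt n.lt_succ_self).trans_isBigO
    (IsBigO.of_bound (b (n + 1))⁻¹ ?_)
  filter_upwards [eventually_ge_atTop 0] with z hz
  have hterm : b (n + 1) * z ^ (n + 1) ≤ ∑' s, b s * z ^ s :=
    (hsum z).le_tsum (n + 1) fun s _ => mul_nonneg (hb s).le (pow_nonneg hz s)
  rw [norm_of_nonneg (pow_nonneg hz _), le_inv_mul_iff₀ (hb _)]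
  exact hterm.trans (le_norm_self _)

lemma isLittleO_tsum_mul_pow (hb : ∀ s, 0 < b s)
    (hsum : ∀ z : ℝ, Summable fun s => b s * z ^ s) (h : a =o[atTop] b) :
    (fun z : ℝ => ∑' s, a s * z ^ s) =o[atTop] fun z => ∑' s, b s * z ^ s := by
  refine isLittleO_iff.mpr fun ε hε => ?_
  obtain ⟨N, hN⟩ := eventually_atTop.mp (isLittleO_iff.mp h (half_pos hε))
  have hhead : (fun z : ℝ => ∑ s ∈ Finset.range N, a s * z ^ s) =o[atTop]
      fun z => ∑' s, b s * z ^ s :=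
    IsLittleO.fun_sum fun s _ => (isLittleO_pow_tsum_mul_pow hb hsum s).const_mul_left (a s)
  filter_upwards [isLittleO_iff.mp hhead (half_pos hε), eventually_ge_atTop 0] with z hz hz0
  have hbz (s : ℕ) : 0 ≤ b s * z ^ s := mul_nonneg (hb s).le (pow_nonneg hz0 s)
  have haz : Summable fun s => a s * z ^ s :=
    summable_of_isBigO_nat (hsum z) (h.isBigO.mul (isBigO_refl _ _))
  have htail : ‖∑' s, a (s + N) * z ^ (s + N)‖ ≤ ε / 2 * ∑' s, b (s + N) * z ^ (s + N) := by
    refine tsum_of_norm_bounded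
      (((summable_nat_add_iff N).mpr (hsum z)).hasSum.mul_left (ε / 2)) fun s => ?_
    have hs := hN (s + N) (Nat.le_add_left N s)
    rw [norm_of_nonneg (hb _).le] at hs
    rw [norm_mul, norm_of_nonneg (pow_nonneg hz0 _), ← mul_assoc]
    gcongr
  have htail_le : ∑' s, b (s + N) * z ^ (s + N) ≤ ‖∑' s, b s * z ^ s‖ := by
    rw [norm_of_nonneg (tsum_nonneg hbz), ← (hsum z).sum_add_tsum_nat_add N]
    exact le_add_of_nonneg_left (Finset.sum_nonneg fun s _ => hbz s)
  calc ‖∑' s, a s * z ^ s‖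
      ≤ ‖∑ s ∈ Finset.range N, a s * z ^ s‖ + ‖∑' s, a (s + N) * z ^ (s + N)‖ := by
        rw [← haz.sum_add_tsum_nat_add N]
        exact norm_add_le _ _
    _ ≤ ε / 2 * ‖∑' s, b s * z ^ s‖ + ε / 2 * ‖∑' s, b s * z ^ s‖ := by
        gcongr
        exact htail.trans (by gcongr)
    _ = ε * ‖∑' s, b s * z ^ s‖ := by ring

lemma tendsto_tsum_div_tsum_of_tendsto_div {L : ℝ} (hb : ∀ s, 0 < b s)
    (hsum : ∀ z : ℝ, Summable fun s => b s * z ^ s)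
    (h : Tendsto (fun s => a s / b s) atTop (𝓝 L)) :
    Tendsto (fun z : ℝ => (∑' s, a s * z ^ s) / ∑' s, b s * z ^ s) atTop (𝓝 L) := by
  have hdiff : (fun s => a s - L * b s) =o[atTop] b := by
    refine (isLittleO_iff_tendsto fun s hs => absurd hs (hb s).ne').mpr ?_
    simpa only [sub_div, mul_div_cancel_right₀ _ (hb _).ne', sub_self] using h.sub_const L
  have hlim := (isLittleO_tsum_mul_pow hb hsum hdiff).tendsto_div_nhds_zero.add_const L
  rw [zero_add] at hlim
  refine hlim.congr' ?_
  filter_upwards [eventually_ge_atTop 0] with z hz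
  have hpos : 0 < ∑' s, b s * z ^ s :=
    (hsum z).tsum_pos (fun s => mul_nonneg (hb s).le (pow_nonneg hz s)) 0 (by simpa using hb 0)
  have hdz : Summable fun s => (a s - L * b s) * z ^ s :=
    summable_of_isBigO_nat (hsum z) (hdiff.isBigO.mul (isBigO_refl _ _))
  have hadd : ∑' s, a s * z ^ s = ∑' s, (a s - L * b s) * z ^ s + L * ∑' s, b s * z ^ s := by
    rw [← tsum_mul_left, ← hdz.tsum_add ((hsum z).mul_left L)]
    exact tsum_congr fun s => by ring
  rw [hadd, add_div, mul_div_cancel_right₀ _ hpos.ne']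

end PowerSeries

/-! ### The lower incomplete Gamma function -/

/-- The lower incomplete Gamma function `γ(q, z) = ∫_0^z e^{-u} u^{q-1} du`. -/
noncomputable def lowerGamma (q z : ℝ) : ℝ :=
  ∫ u in (0 : ℝ)..z, exp (-u) * u ^ (q - 1)

lemma intervalIntegrable_exp_neg_mul_rpow {q z : ℝ} (hq : 0 < q) :
    IntervalIntegrable (fun u => exp (-u) * u ^ (q - 1)) MeasureTheory.volume 0 z :=
  (intervalIntegral.intervalIntegrable_rpow' (by linarith)).continuousOn_mul (by fun_prop)

lemma lowerGamma_nonneg (q : ℝ) {z : ℝ} (hz : 0 ≤ z) : 0 ≤ lowerGamma q z :=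
  intervalIntegral.integral_nonneg hz fun _ hu =>
    mul_nonneg (exp_pos _).le (rpow_nonneg hu.1 _)

lemma tendsto_lowerGamma {q : ℝ} (hq : 0 < q) :
    Tendsto (lowerGamma q) atTop (𝓝 (Gamma q)) := by
  rw [Gamma_eq_integral hq]
  exact MeasureTheory.intervalIntegral_tendsto_integral_Ioi 0 (GammaIntegral_convergent hq)
    tendsto_id

lemma mul_lowerGamma_le_rpow {q z : ℝ} (hq : 0 < q) (hz : 0 ≤ z) :
    q * lowerGamma q z ≤ z ^ q := by
  have hle : lowerGamma q z ≤ ∫ u in (0 : ℝ)..z, u ^ (q - 1) := by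
    refine intervalIntegral.integral_mono_on hz (intervalIntegrable_exp_neg_mul_rpow hq)
      (intervalIntegral.intervalIntegrable_rpow' (by linarith)) fun u hu => ?_
    exact mul_le_of_le_one_left (rpow_nonneg hu.1 _) (exp_le_one_iff.mpr (neg_nonpos.mpr hu.1))
  rw [integral_rpow (.inl (by linarith)), sub_add_cancel, zero_rpow hq.ne', sub_zero,
    le_div_iff₀ hq] at hle
  linarith

lemma mul_lowerGamma_eq_add {q z : ℝ} (hq : 0 < q) (hz : 0 ≤ z) :
    q * lowerGamma q z = exp (-z) * z ^ q + lowerGamma (q + 1) z := by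
  have hderiv (u : ℝ) (hu : u ∈ Set.Ioo 0 z) : HasDerivAt (fun u => exp (-u) * u ^ q)
      (q * (exp (-u) * u ^ (q - 1)) - exp (-u) * u ^ (q + 1 - 1)) u := by
    refine ((hasDerivAt_neg u).exp.mul (hasDerivAt_rpow_const (.inl hu.1.ne'))).congr_deriv ?_
    rw [add_sub_cancel_right]
    ring
  have hcont : Continuous fun u : ℝ => exp (-u) * u ^ q :=
    continuous_neg.rexp.mul (continuous_rpow_const hq.le)
  have hint := intervalIntegrable_exp_neg_mul_rpow (z := z) hq
  have hint1 := intervalIntegrable_exp_neg_mul_rpow (z := z) (add_pos hq one_pos)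
  have hftc := intervalIntegral.integral_eq_sub_of_hasDerivAt_of_le hz
    hcont.continuousOn hderiv ((hint.const_mul q).sub hint1)
  rw [intervalIntegral.integral_sub (hint.const_mul q) hint1,
    intervalIntegral.integral_const_mul, zero_rpow hq.ne', mul_zero, sub_zero] at hftc
  exact eq_add_of_sub_eq hftc

lemma mul_lowerGamma_eq_sum_add {q z : ℝ} (hq : 0 < q) (hz : 0 < z) (n : ℕ) :
    q * lowerGamma q z = exp (-z) * z ^ q * ∑ s ∈ Finset.range n, z ^ s / poch (q + 1) s +
      (q + n) * lowerGamma (q + n) z / poch (q + 1) n := by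
  induction n with
  | zero => simp [poch]
  | succ n ih =>
    have hpoch := poch_pos (add_pos hq one_pos) n
    rw [ih, mul_lowerGamma_eq_add (by positivity) hz.le, Finset.sum_range_succ, poch_succ,
      rpow_add_natCast hz.ne', Nat.cast_add_one, ← add_assoc, add_right_comm q 1]
    field_simp
    ring

theorem mul_lowerGamma_eq_kummerM {q z : ℝ} (hq : 0 < q) (hz : 0 < z) :
    q * lowerGamma q z = exp (-z) * z ^ q * kummerM 1 (q + 1) z := by
  have hterm (s : ℕ) : poch 1 s / (poch (q + 1) s * s !) * z ^ s = z ^ s / poch (q + 1) s := by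
    rw [poch_one]
    field_simp
  have hsum := summable_kummerM 1 (q + 1) z
  simp only [hterm] at hsum
  have hremainder : Tendsto (fun n : ℕ => (q + n) * lowerGamma (q + n) z / poch (q + 1) n) atTop
      (𝓝 0) := by
    refine squeeze_zero (fun n => ?_) (fun n => ?_)
      (by simpa using hsum.tendsto_atTop_zero.const_mul (z ^ q))
    · have := poch_pos (add_pos hq one_pos) n
      have := lowerGamma_nonneg (q + n) hz.le
      positivity
    · rw [← mul_div_assoc, ← rpow_add_natCast hz.ne']
      exact div_le_div_of_nonneg_right (mul_lowerGamma_le_rpow (by positivity) hz.le)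
        (poch_pos (add_pos hq one_pos) n).le
  have hlim := (hsum.hasSum.tendsto_sum_nat.const_mul (exp (-z) * z ^ q)).add hremainder
  simp only [← mul_lowerGamma_eq_sum_add hq hz, add_zero] at hlim
  rw [tendsto_nhds_unique tendsto_const_nhds hlim, kummerM]
  simp only [hterm]

/-! ### Poisson means of regularly varying sequences -/

/-- The expectation `e^{-z} ∑ u_s z^s / s!` of `u` under the Poisson law of mean `z`, used to
normalise the exponential growth of a series. It is only meaningful when the series converges. -/
noncomputable def poissonMean (u : ℕ → ℝ) (z : ℝ) : ℝ :=
  exp (-z) * ∑' s : ℕ, u s / s ! * z ^ s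

lemma exp_neg_mul_kummerM_eq_poissonMean (a b z : ℝ) :
    exp (-z) * kummerM a b z = poissonMean (fun s => poch a s / poch b s) z := by
  simp only [poissonMean, kummerM, div_div]

lemma tendsto_poissonMean_poch_one_div_poch {q : ℝ} (hq : 0 < q) :
    Tendsto (fun z => poissonMean (fun s => poch 1 s / poch (q + 1) s) z / z ^ (-q)) atTop
      (𝓝 (Gamma (q + 1))) := by
  rw [Gamma_add_one hq.ne']
  refine ((tendsto_lowerGamma hq).const_mul q).congr' ?_
  filter_upwards [eventually_gt_atTop 0] with z hz
  rw [mul_lowerGamma_eq_kummerM hq hz, ← exp_neg_mul_kummerM_eq_poissonMean, rpow_neg hz.le,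
    div_inv_eq_mul, mul_right_comm]

lemma summable_div_factorial_mul_pow {u : ℕ → ℝ} {p L : ℝ}
    (hu : Tendsto (fun s : ℕ => u s / (s : ℝ) ^ p) atTop (𝓝 L)) (z : ℝ) :
    Summable fun s : ℕ => u s / s ! * z ^ s := by
  have hrpow : (fun s : ℕ => (s : ℝ) ^ p) =O[atTop] fun s => exp s :=
    ((isLittleO_rpow_exp_atTop p).comp_tendsto tendsto_natCast_atTop_atTop).isBigO
  have hexp : u =O[atTop] fun s => exp s := by
    refine ((hu.isBigO_one ℝ).mul hrpow).congr' ?_ (.of_forall fun s => one_mul _)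
    filter_upwards [eventually_gt_atTop 0] with s hs
    exact div_mul_cancel₀ _ (rpow_pos_of_pos (Nat.cast_pos.mpr hs) p).ne'
  refine summable_of_isBigO_nat (summable_pow_div_factorial (exp 1 * z)) ?_
  refine (hexp.mul (isBigO_refl (fun s : ℕ => z ^ s / s !) _)).congr (fun s => ?_) fun s => ?_
  · rw [mul_div_left_comm, mul_comm]
  · rw [mul_pow, ← exp_nat_mul, mul_one, mul_div_assoc]

lemma poissonMean_eq_add {u : ℕ → ℝ} {z : ℝ} (hu : Summable fun s : ℕ => u s / s ! * z ^ s) :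
    poissonMean u z = exp (-z) * u 0 + z * poissonMean (fun s => u (s + 1) / (s + 1)) z := by
  have hterm (s : ℕ) : u (s + 1) / (s + 1)! * z ^ (s + 1) =
      z * (u (s + 1) / (s + 1) / s ! * z ^ s) := by
    rw [Nat.factorial_succ, Nat.cast_mul, Nat.cast_add_one, div_div, pow_succ]
    ring
  simp only [poissonMean, hu.tsum_eq_zero_add, hterm, tsum_mul_left, Nat.factorial_zero,
    Nat.cast_one, div_one, pow_zero, mul_one]
  ring

lemma tendsto_poissonMean_div_poissonMean {u r : ℕ → ℝ} {L : ℝ} (hr : ∀ s, 0 < r s)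
    (hsum : ∀ z : ℝ, Summable fun s : ℕ => r s / s ! * z ^ s)
    (h : Tendsto (fun s => u s / r s) atTop (𝓝 L)) :
    Tendsto (fun z => poissonMean u z / poissonMean r z) atTop (𝓝 L) := by
  have hfac (s : ℕ) : (0 : ℝ) < s ! := Nat.cast_pos.mpr s.factorial_pos
  simp only [poissonMean, mul_div_mul_left _ _ (exp_pos _).ne']
  refine tendsto_tsum_div_tsum_of_tendsto_div (fun s => div_pos (hr s) (hfac s)) hsum ?_
  simpa only [div_div_div_cancel_right₀ (hfac _).ne'] using h

lemma tendsto_shift_div_rpow {u : ℕ → ℝ} {p L : ℝ}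
    (hu : Tendsto (fun s : ℕ => u s / (s : ℝ) ^ p) atTop (𝓝 L)) :
    Tendsto (fun s : ℕ => u (s + 1) / (s + 1) / (s : ℝ) ^ (p - 1)) atTop (𝓝 L) := by
  have hbase : Tendsto (fun s : ℕ => ((1 + s) / (0 + s) : ℝ) ^ (p - 1)) atTop (𝓝 1) := by
    simpa using (tendsto_add_natCast_div_add_natCast 1 0).rpow_const (.inl one_ne_zero)
  have hlim := ((tendsto_add_atTop_iff_nat 1).mpr hu).mul hbase
  rw [mul_one] at hlim
  refine hlim.congr' ?_
  filter_upwards [eventually_gt_atTop 0] with s hs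
  have hs : (0 : ℝ) < s := Nat.cast_pos.mpr hs
  rw [zero_add, Nat.cast_add_one, add_comm 1 (s : ℝ), div_rpow (by positivity) hs.le,
    rpow_sub_one (by positivity : (s : ℝ) + 1 ≠ 0)]
  field_simp

lemma tendsto_poissonMean_div_rpow_of_neg {u : ℕ → ℝ} {p L : ℝ} (hp : p < 0)
    (hu : Tendsto (fun s : ℕ => u s / (s : ℝ) ^ p) atTop (𝓝 L)) :
    Tendsto (fun z => poissonMean u z / z ^ p) atTop (𝓝 L) := by
  obtain ⟨q, hq, rfl⟩ : ∃ q, 0 < q ∧ p = -q := ⟨-p, neg_pos.mpr hp, (neg_neg p).symm⟩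
  have hΓ : Gamma (q + 1) ≠ 0 := (Gamma_pos_of_pos (by linarith)).ne'
  have href : Tendsto (fun s : ℕ => poch 1 s / poch (q + 1) s / (s : ℝ) ^ (-q)) atTop
      (𝓝 (Gamma (q + 1))) := by
    simpa only [Gamma_one, div_one, sub_add_cancel_right] using
      tendsto_poch_div_poch_div_rpow (ne_neg_natCast_of_pos one_pos) (q + 1)
  have hcoeff : Tendsto (fun s => u s / (poch 1 s / poch (q + 1) s)) atTop
      (𝓝 (L / Gamma (q + 1))) := by
    refine (hu.div href hΓ).congr' ?_
    filter_upwards [eventually_gt_atTop 0] with s hs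
    rw [Pi.div_apply, div_div_div_cancel_right₀ (rpow_pos_of_pos (Nat.cast_pos.mpr hs) _).ne']
  have hmean := tendsto_poissonMean_poch_one_div_poch hq
  have hlim := (tendsto_poissonMean_div_poissonMean
    (fun s => div_pos (poch_pos one_pos s) (poch_pos (by linarith) s))
    (summable_div_factorial_mul_pow href) hcoeff).mul hmean
  rw [div_mul_cancel₀ _ hΓ] at hlim
  refine hlim.congr' ?_
  filter_upwards [hmean.eventually_ne hΓ] with z hz
  exact div_mul_div_cancel₀ (div_ne_zero_iff.mp hz).1

theorem tendsto_poissonMean_div_rpow {u : ℕ → ℝ} {p L : ℝ}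
    (hu : Tendsto (fun s : ℕ => u s / (s : ℝ) ^ p) atTop (𝓝 L)) :
    Tendsto (fun z => poissonMean u z / z ^ p) atTop (𝓝 L) := by
  obtain ⟨n, hn⟩ := exists_nat_gt p
  induction n generalizing u p with
  | zero => exact tendsto_poissonMean_div_rpow_of_neg (by simpa using hn) hu
  | succ n ih =>
    have hshift := ih (tendsto_shift_div_rpow hu) (by push_cast at hn; linarith)
    have hzero := (tendsto_rpow_mul_exp_neg_mul_atTop_nhds_zero (-p) 1 one_pos).mul_const (u 0)
    have hlim := hzero.add hshift
    rw [zero_mul, zero_add] at hlim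
    refine hlim.congr' ?_
    filter_upwards [eventually_gt_atTop 0] with z hz
    rw [poissonMean_eq_add (summable_div_factorial_mul_pow hu z), rpow_sub_one hz.ne',
      rpow_neg hz.le, neg_one_mul]
    field_simp

theorem tendsto_rpow_mul_kummerM_neg {a b : ℝ} (hb : ∀ k : ℕ, b ≠ -k)
    (hba : ∀ k : ℕ, b - a ≠ -k) :
    Tendsto (fun z => z ^ a * kummerM a b (-z)) atTop (𝓝 (Gamma b / Gamma (b - a))) := by
  have hcoeff := tendsto_poch_div_poch_div_rpow hba b
  refine (tendsto_poissonMean_div_rpow hcoeff).congr' ?_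
  filter_upwards [eventually_ge_atTop 0] with z hz
  rw [← exp_neg_mul_kummerM_eq_poissonMean, ← kummerM_neg a hb, sub_sub_cancel_left,
    rpow_neg hz, div_inv_eq_mul, mul_comm]

theorem statement_12_general (α d x : ℝ) (hα : ∀ k : ℕ, α ≠ -(2 * k + 1))
    (hd : 0 < d) (hx : 0 < x) :
    Tendsto (fun t : ℝ => t ^ (α / 2) * kummerM (-α / 2) (1 / 2) (-x ^ 2 / (4 * d * t)))
      (𝓝[>] 0) (𝓝 (√π / Gamma (α / 2 + 1 / 2) * (x ^ α / (2 ^ α * d ^ (α / 2))))) := by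
  have hz : Tendsto (fun t : ℝ => x ^ 2 / (4 * d) * t⁻¹) (𝓝[>] 0) atTop :=
    tendsto_inv_nhdsGT_zero.const_mul_atTop (by positivity)
  have hkummer := tendsto_rpow_mul_kummerM_neg (a := -α / 2) (b := 1 / 2)
    (ne_neg_natCast_of_pos one_half_pos) (fun k h => hα k (by linarith))
  rw [Gamma_one_half_eq, show 1 / 2 - -α / 2 = α / 2 + 1 / 2 by ring] at hkummer
  refine ((hkummer.comp hz).mul_const (x ^ α / (2 ^ α * d ^ (α / 2)))).congr' ?_
  filter_upwards [self_mem_nhdsWithin] with t (ht : 0 < t)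
  have hscale : (x ^ 2 / (4 * d) * t⁻¹) ^ (-α / 2) * (x ^ α / (2 ^ α * d ^ (α / 2))) =
      t ^ (α / 2) := by
    rw [← div_eq_mul_inv, div_div, neg_div, rpow_neg (by positivity),
      div_rpow (by positivity) (by positivity), mul_rpow (by positivity) ht.le,
      mul_rpow (by positivity) hd.le, show (4 : ℝ) = 2 ^ 2 by norm_num,
      ← rpow_natCast_mul hx.le, ← rpow_natCast_mul two_pos.le,
      Nat.cast_ofNat, mul_div_cancel₀ α two_ne_zero]
    field_simp
  rw [← hscale, Function.comp_apply, mul_right_comm, ← div_eq_mul_inv, div_div, neg_div (4 * d * t)]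

end

/-- for non-integer `α > 0`, `d > 0`, `x > 0`,
`lim_{t→0⁺} t^{α/2} M(−α/2, 1/2, −x²/(4dt)) = (√π/Γ(α/2+1/2)) · x^α/(2^α d^{α/2})`. -/
theorem statement_12 (α d x : ℝ) (hα : 0 < α) (hαnotint : ∀ n : ℤ, α ≠ n)
    (hd : 0 < d) (hx : 0 < x) :
    Filter.Tendsto
      (fun t : ℝ => t ^ (α / 2) * kummerM (-α / 2) (1 / 2) (-x ^ 2 / (4 * d * t)))
      (nhdsWithin 0 (Set.Ioi 0))
      (nhds (Real.sqrt Real.pi / Real.Gamma (α / 2 + 1 / 2) *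
        (x ^ α / ((2:ℝ) ^ α * d ^ (α / 2))))) :=
  statement_12_general α d x
    (fun _ => ((neg_neg_of_pos (by positivity)).trans hα).ne') hd hx
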